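/- Suppose the regressors satisfy the PE condition with constants 0 < ε₁ ≤ ε₂ and window ΔT ≥ 1 and that λ > 1. Then for all k ≥ ΔT, F_k^{−1} ≤ F_{ΔT−1}^{−1} + (κ·ε₂ / (λ·(1 − λ^{−ΔT})))·I in the Loewner order; consequently there exists F_min > 0 (namely F_min^{−1} equal to the largest eigenvalue of F_{ΔT−1}^{−1} + (κ·ε₂/(λ·(1 − λ^{−ΔT})))·I) such that F_k ≥ F_min·I for all k ≥ 0. -/

import Mathlib

open Matrix

/-!
By the Sherman–Morrison formula the recursion for `F` becomes
`F_k⁻¹ = λ⁻¹ (F_{k-1}⁻¹ + c_k φ_k φ_kᵀ)` with `0 ≤ c_k ≤ κ` (`inv_step`).  Testing against a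
vector `x`, the numbers `a k = xᵀ F_k⁻¹ x` and `b k = (φ_kᵀ x)²` satisfy
`a k ≤ (a (k-1) + κ b k) / λ`, and the excitation condition bounds every window sum of `b` by
`E = ε₂ |x|²`.

Running the scalar recursion over a full window of length `T = ΔT` gives
`a (k + T) ≤ λ⁻ᵀ a k + κ E / λ`.  The constant `C = κ E / (λ (1 - λ⁻ᵀ))` is the fixed point of
`C ↦ λ⁻ᵀ C + κ E / λ`, so the bound `a ≤ a (T - 1) + C` propagates from one window to the next
(`scalar_bound`).

For the lower bound on `F_k`, an upper bound `F_k⁻¹ ≤ M I` yields `F_k ≥ M⁻¹ I`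
(`sub_smul_one_posSemidef`); a common `M` is `C` plus the entrywise norms of the finitely many
`F_j⁻¹` with `j < ΔT`.
-/

/-- Sherman–Morrison for one step of the recursion. -/
lemma inv_step {n : ℕ} (G : Matrix (Fin n) (Fin n) ℝ) (hG : G.PosDef) (v : Fin n → ℝ)
    (l κ η : ℝ) (hl : 0 < l) (hη : 0 < η) (hηκ : κ ≤ η) :
    (l • (G - (κ / (1 + η * (v ⬝ᵥ G *ᵥ v))) • (G * vecMulVec v v * G)))⁻¹ =
      l⁻¹ • (G⁻¹ + (κ / (1 + (η - κ) * (v ⬝ᵥ G *ᵥ v))) • vecMulVec v v) := by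
  have hs : 0 ≤ v ⬝ᵥ G *ᵥ v := by simpa using hG.posSemidef.dotProduct_mulVec_nonneg v
  have hGG : G * G⁻¹ = 1 := mul_nonsing_inv G ((isUnit_iff_isUnit_det G).1 hG.isUnit)
  have hVGV : vecMulVec v v * G * vecMulVec v v = (v ⬝ᵥ G *ᵥ v) • vecMulVec v v := by
    rw [vecMulVec_mul, vecMulVec_mul_vecMulVec, dotProduct_mulVec]
    ext i j
    simp [vecMulVec_apply]
    ring
  set s := v ⬝ᵥ G *ᵥ v
  have h1 : 0 < 1 + η * s := by positivity
  have h2 : 0 < 1 + (η - κ) * s := by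
    have : 0 ≤ (η - κ) * s := mul_nonneg (by linarith) hs
    linarith
  apply inv_eq_right_inv
  have e1 : G * vecMulVec v v * G * G⁻¹ = G * vecMulVec v v := by
    rw [Matrix.mul_assoc _ G, hGG, Matrix.mul_one]
  have e2 : G * vecMulVec v v * G * vecMulVec v v = s • (G * vecMulVec v v) := by
    rw [Matrix.mul_assoc G, Matrix.mul_assoc G, hVGV, Matrix.mul_smul]
  have hc : κ / (1 + (η - κ) * s) - κ / (1 + η * s)
      - κ / (1 + η * s) * (κ / (1 + (η - κ) * s)) * s = 0 := by
    field_simp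
    ring
  rw [Matrix.smul_mul, Matrix.mul_smul, smul_smul, mul_inv_cancel₀ hl.ne', one_smul,
    Matrix.sub_mul, Matrix.mul_add, Matrix.mul_add, hGG, Matrix.smul_mul, Matrix.smul_mul,
    Matrix.mul_smul, Matrix.mul_smul, e1, e2]
  have : ∀ c d : ℝ, ∀ W : Matrix (Fin n) (Fin n) ℝ,
      1 + c • W - (d • W + d • c • s • W) = 1 + (c - d - d * c * s) • W := by
    intro c d W
    module
  rw [this, hc, zero_smul, add_zero]

/-- Iterating the scalar recursion; the weights on the inputs are all bounded by `κ / l`. -/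
lemma scalar_iter (a b : ℕ → ℝ) (l κ : ℝ) (hl : 1 < l) (hκ : 0 < κ)
    (hb : ∀ k, 0 ≤ b k) (hstep : ∀ k, a (k + 1) ≤ (a k + κ * b (k + 1)) / l) (k m : ℕ) :
    a (k + m) ≤ (l ^ m)⁻¹ * a k + κ / l * ∑ i ∈ Finset.Ico (k + 1) (k + m + 1), b i := by
  have hl0 : 0 < l := by linarith
  induction m with
  | zero => simp
  | succ m ih =>
    rw [← add_assoc, Finset.sum_Ico_succ_top (by omega)]
    set S := ∑ i ∈ Finset.Ico (k + 1) (k + m + 1), b i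
    have hS : 0 ≤ κ / l * S :=
      mul_nonneg (by positivity) (Finset.sum_nonneg fun i _ => hb i)
    have h1 : κ / l * S / l ≤ κ / l * S := div_le_self hS hl.le
    calc a (k + m + 1) ≤ (a (k + m) + κ * b (k + m + 1)) / l := hstep _
      _ ≤ ((l ^ m)⁻¹ * a k + κ / l * S + κ * b (k + m + 1)) / l := by gcongr
      _ = (l ^ (m + 1))⁻¹ * a k + κ / l * S / l + κ / l * b (k + m + 1) := by
        rw [pow_succ]; field_simp
      _ ≤ _ := by rw [mul_add]; linarith

/-- The scalar form of the upper bound: windows of length `T` starting at an index `≥ 1` have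
`b`-sum at most `E`. -/
lemma scalar_bound (a b : ℕ → ℝ) (l κ E : ℝ) (T : ℕ) (hl : 1 < l) (hκ : 0 < κ) (hT : 1 ≤ T)
    (ha : ∀ k, 0 ≤ a k) (hb : ∀ k, 0 ≤ b k)
    (hstep : ∀ k, a (k + 1) ≤ (a k + κ * b (k + 1)) / l)
    (hwin : ∀ k, T < k → ∑ i ∈ Finset.Ico (k - T) k, b i ≤ E) (k : ℕ) (hk : T ≤ k) :
    a k ≤ a (T - 1) + κ * E / (l * (1 - (l ^ T)⁻¹)) := by
  have hl0 : 0 < l := by linarith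
  have hq0 : 0 < (l ^ T)⁻¹ := by positivity
  have hq1 : (l ^ T)⁻¹ < 1 := inv_lt_one_of_one_lt₀ (one_lt_pow₀ hl (by omega))
  have hE : 0 ≤ E := (Finset.sum_nonneg fun i _ => hb i).trans (hwin (T + 1) (by omega))
  set q := (l ^ T)⁻¹ with hq
  set C := κ * E / (l * (1 - q)) with hC
  have hq1' : 0 < 1 - q := by linarith
  have hC0 : 0 ≤ C := by positivity
  have hfix : κ / l * E = (1 - q) * C := by rw [hC]; field_simp
  have hκl : 0 ≤ κ / l := by positivity
  induction k using Nat.strong_induction_on with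
  | _ k ih =>
  by_cases h : k < 2 * T - 1
  · -- less than one window after `T - 1`: the inputs so far lie in the window ending at `k`
    obtain ⟨m, rfl⟩ : ∃ m, k = (T - 1) + m := ⟨k - (T - 1), by omega⟩
    have h1 := scalar_iter a b l κ hl hκ hb hstep (T - 1) m
    have h2 : ∑ i ∈ Finset.Ico (T - 1 + 1) (T - 1 + m + 1), b i ≤ E := by
      refine le_trans (Finset.sum_le_sum_of_subset_of_nonneg ?_ fun i _ _ => hb i)
        (hwin (T - 1 + m + 1) (by omega))
      exact Finset.Ico_subset_Ico (by omega) le_rfl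
    have h3 : (l ^ m)⁻¹ * a (T - 1) ≤ a (T - 1) :=
      mul_le_of_le_one_left (ha _) (inv_le_one_of_one_le₀ (one_le_pow₀ hl.le))
    have h4 := mul_le_mul_of_nonneg_left h2 hκl
    nlinarith [mul_nonneg hq0.le hC0]
  · obtain ⟨j, rfl⟩ : ∃ j, k = j + T := ⟨k - T, by omega⟩
    have h1 := scalar_iter a b l κ hl hκ hb hstep j T
    have h2 := hwin (j + T + 1) (by omega)
    rw [show j + T + 1 - T = j + 1 by omega] at h2
    have h3 : a j ≤ a (T - 1) + C := by
      by_cases hj : T ≤ j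
      · exact ih j (by omega) hj
      · rw [show j = T - 1 by omega]; linarith
    have h4 := mul_le_mul_of_nonneg_left h2 hκl
    have h5 := mul_le_mul_of_nonneg_left h3 hq0.le
    have h6 : 0 ≤ (1 - q) * a (T - 1) := mul_nonneg hq1'.le (ha _)
    rw [← hq] at h1
    nlinarith

lemma quad_le_sum_abs {n : ℕ} (B : Matrix (Fin n) (Fin n) ℝ) (x : Fin n → ℝ) :
    x ⬝ᵥ B *ᵥ x ≤ (∑ i, ∑ j, |B i j|) * (x ⬝ᵥ x) := by
  have hx : ∀ i, x i ^ 2 ≤ x ⬝ᵥ x := fun i => by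
    rw [dotProduct, sq]
    exact Finset.single_le_sum (f := fun i => x i * x i) (fun j _ => mul_self_nonneg _)
      (Finset.mem_univ i)
  have hexp : x ⬝ᵥ B *ᵥ x = ∑ i, ∑ j, x i * (B i j * x j) := by
    simp only [dotProduct, mulVec, Finset.mul_sum]
  rw [hexp, Finset.sum_mul]
  refine Finset.sum_le_sum fun i _ => ?_
  rw [Finset.sum_mul]
  refine Finset.sum_le_sum fun j _ => ?_
  have h1 : |x i * x j| ≤ x ⬝ᵥ x := by
    rw [abs_le]
    constructor <;> nlinarith [hx i, hx j, sq_nonneg (x i - x j), sq_nonneg (x i + x j)]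
  calc x i * (B i j * x j) ≤ |x i * (B i j * x j)| := le_abs_self _
    _ = |B i j| * |x i * x j| := by rw [← abs_mul]; congr 1; ring
    _ ≤ _ := by gcongr

/-- If `P⁻¹ ≤ M I` then `P ≥ M⁻¹ I`: expand `(x - M⁻¹ P⁻¹ x)ᵀ P (x - M⁻¹ P⁻¹ x) ≥ 0`. -/
lemma sub_smul_one_posSemidef {n : ℕ} (P : Matrix (Fin n) (Fin n) ℝ) (hP : P.PosDef) (M : ℝ)
    (hM : 0 < M) (h : ∀ x : Fin n → ℝ, x ⬝ᵥ P⁻¹ *ᵥ x ≤ M * (x ⬝ᵥ x)) :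
    (P - M⁻¹ • (1 : Matrix (Fin n) (Fin n) ℝ)).PosSemidef := by
  refine PosSemidef.of_dotProduct_mulVec_nonneg (hP.1.sub ?_) fun x => ?_
  · rw [IsHermitian, conjTranspose_smul, conjTranspose_one]; simp
  have hPP : P * P⁻¹ = 1 := mul_nonsing_inv P ((isUnit_iff_isUnit_det P).1 hP.isUnit)
  have hPy : P *ᵥ (P⁻¹ *ᵥ x) = x := by rw [mulVec_mulVec, hPP, one_mulVec]
  have hsym : (P⁻¹ *ᵥ x) ⬝ᵥ (P *ᵥ x) = x ⬝ᵥ x := by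
    have hPt : Pᵀ = P := by simpa [IsHermitian] using hP.1
    rw [dotProduct_mulVec, ← mulVec_transpose, hPt, hPy]
  have h0 := hP.posSemidef.dotProduct_mulVec_nonneg (x - M⁻¹ • (P⁻¹ *ᵥ x))
  simp only [star_trivial, mulVec_sub, mulVec_smul, hPy, sub_dotProduct, dotProduct_sub,
    smul_dotProduct, dotProduct_smul, smul_eq_mul, hsym, dotProduct_comm (P⁻¹ *ᵥ x) x] at h0
  simp only [star_trivial, sub_mulVec, smul_mulVec, one_mulVec, dotProduct_sub,
    dotProduct_smul, smul_eq_mul]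
  have h1 : M⁻¹ * (M⁻¹ * (x ⬝ᵥ P⁻¹ *ᵥ x)) ≤ M⁻¹ * (M⁻¹ * (M * (x ⬝ᵥ x))) := by
    gcongr
    exact h x
  rw [inv_mul_cancel_left₀ hM.ne'] at h1
  linarith

lemma dotProduct_vecMulVec_self {n : ℕ} (v x : Fin n → ℝ) :
    x ⬝ᵥ vecMulVec v v *ᵥ x = (v ⬝ᵥ x) ^ 2 := by
  rw [vecMulVec_mulVec]
  simp [dotProduct_comm x v, sq]

/-- Lower bound on the gain matrices under persistent excitation (Lemma 2): for k ≥ ΔT,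
F_k⁻¹ ≤ F_{ΔT−1}⁻¹ + (κε₂/(λ(1 − λ^{−ΔT})))·I, and consequently there exists
F_min > 0 with F_k ≥ F_min·I for all k ≥ 0. -/
theorem stmt_4 {n : ℕ} (hn : 1 ≤ n) (φ : ℕ → Fin n → ℝ)
    (l κ η : ℝ) (hl : 1 < l) (hκ : 0 < κ) (hη : 0 < η) (hηκ : κ ≤ η)
    (F : ℕ → Matrix (Fin n) (Fin n) ℝ)
    (hF0 : (F 0).PosDef)
    (hFpos : ∀ k : ℕ, (F k).PosDef)
    (hFrec : ∀ k : ℕ, 1 ≤ k →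
      F k = l • (F (k - 1) -
        (κ / (1 + η * (φ k ⬝ᵥ (F (k - 1)).mulVec (φ k)))) •
          (F (k - 1) * vecMulVec (φ k) (φ k) * F (k - 1))))
    (ε₁ ε₂ : ℝ) (ΔT : ℕ) (hε₁ : 0 < ε₁) (hε : ε₁ ≤ ε₂) (hΔT : 1 ≤ ΔT)
    (hPE : ∀ k : ℕ, ΔT < k →
      ((∑ i ∈ Finset.Ico (k - ΔT) k, vecMulVec (φ i) (φ i)) -
          ε₁ • (1 : Matrix (Fin n) (Fin n) ℝ)).PosSemidef ∧
        (ε₂ • (1 : Matrix (Fin n) (Fin n) ℝ) -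
          ∑ i ∈ Finset.Ico (k - ΔT) k, vecMulVec (φ i) (φ i)).PosSemidef) :
    (∀ k : ℕ, ΔT ≤ k →
      ((F (ΔT - 1))⁻¹ + (κ * ε₂ / (l * (1 - (l ^ ΔT)⁻¹))) • (1 : Matrix (Fin n) (Fin n) ℝ) -
        (F k)⁻¹).PosSemidef) ∧
      ∃ Fmin : ℝ, 0 < Fmin ∧
        ∀ k : ℕ, (F k - Fmin • (1 : Matrix (Fin n) (Fin n) ℝ)).PosSemidef := by
  have hl0 : 0 < l := by linarith
  have hq1 : (l ^ ΔT)⁻¹ < 1 := inv_lt_one_of_one_lt₀ (one_lt_pow₀ hl (by omega))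
  set C := κ * ε₂ / (l * (1 - (l ^ ΔT)⁻¹)) with hC
  have hC0 : 0 < C := by
    have : 0 < 1 - (l ^ ΔT)⁻¹ := by linarith
    have : 0 < ε₂ := by linarith
    positivity
  have hstep : ∀ (x : Fin n → ℝ) (k : ℕ), x ⬝ᵥ (F (k + 1))⁻¹ *ᵥ x ≤
      (x ⬝ᵥ (F k)⁻¹ *ᵥ x + κ * (φ (k + 1) ⬝ᵥ x) ^ 2) / l := by
    intro x k
    have hr := hFrec (k + 1) (by omega)
    simp only [Nat.add_sub_cancel] at hr
    rw [hr, inv_step (F k) (hFpos k) _ l κ η hl0 hη hηκ]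
    have hs : 0 ≤ φ (k + 1) ⬝ᵥ F k *ᵥ φ (k + 1) := by
      simpa using (hFpos k).posSemidef.dotProduct_mulVec_nonneg (φ (k + 1))
    have hc : κ / (1 + (η - κ) * (φ (k + 1) ⬝ᵥ F k *ᵥ φ (k + 1))) ≤ κ :=
      div_le_self hκ.le (by nlinarith [mul_nonneg (sub_nonneg.2 hηκ) hs])
    rw [smul_mulVec, add_mulVec, smul_mulVec, dotProduct_smul, dotProduct_add,
      dotProduct_smul, dotProduct_vecMulVec_self, smul_eq_mul, smul_eq_mul, div_eq_inv_mul _ l]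
    gcongr
  have hwin : ∀ (x : Fin n → ℝ) (k : ℕ), ΔT < k →
      ∑ i ∈ Finset.Ico (k - ΔT) k, (φ i ⬝ᵥ x) ^ 2 ≤ ε₂ * (x ⬝ᵥ x) := by
    intro x k hk
    have h := (hPE k hk).2.dotProduct_mulVec_nonneg x
    simp only [star_trivial, sub_mulVec, smul_mulVec, one_mulVec, dotProduct_sub,
      dotProduct_smul, smul_eq_mul, sum_mulVec, dotProduct_sum,
      dotProduct_vecMulVec_self] at h
    linarith
  have hpos : ∀ (x : Fin n → ℝ) (k : ℕ), 0 ≤ x ⬝ᵥ (F k)⁻¹ *ᵥ x := fun x k => by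
    simpa using (hFpos k).inv.posSemidef.dotProduct_mulVec_nonneg x
  have key : ∀ (x : Fin n → ℝ) (k : ℕ), ΔT ≤ k →
      x ⬝ᵥ (F k)⁻¹ *ᵥ x ≤ x ⬝ᵥ (F (ΔT - 1))⁻¹ *ᵥ x + C * (x ⬝ᵥ x) := by
    intro x k hk
    have h := scalar_bound (fun k => x ⬝ᵥ (F k)⁻¹ *ᵥ x) (fun k => (φ k ⬝ᵥ x) ^ 2) l κ
      (ε₂ * (x ⬝ᵥ x)) ΔT hl hκ hΔT (hpos x) (fun k => sq_nonneg _) (hstep x) (hwin x) k hk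
    rw [← mul_assoc, mul_div_right_comm] at h
    exact h
  refine ⟨fun k hk => ?_, ?_⟩
  · refine PosSemidef.of_dotProduct_mulVec_nonneg
      (((hFpos _).inv.1.add ?_).sub (hFpos k).inv.1) fun x => ?_
    · rw [IsHermitian, conjTranspose_smul, conjTranspose_one]; simp
    · simp only [star_trivial, sub_mulVec, add_mulVec, smul_mulVec, one_mulVec, dotProduct_sub,
        dotProduct_add, dotProduct_smul, smul_eq_mul]
      linarith [key x k hk]
  · set N : ℕ → ℝ := fun k => ∑ i, ∑ j, |(F k)⁻¹ i j| with hN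
    have hN0 : ∀ k, 0 ≤ N k := fun k => by positivity
    have hNle : ∀ k, k < ΔT → N k ≤ ∑ j ∈ Finset.range ΔT, N j := fun k hk =>
      Finset.single_le_sum (fun j _ => hN0 j) (Finset.mem_range.2 hk)
    have hM : 0 < ∑ j ∈ Finset.range ΔT, N j + C :=
      add_pos_of_nonneg_of_pos (Finset.sum_nonneg fun j _ => hN0 j) hC0
    refine ⟨_, inv_pos.2 hM, fun k => sub_smul_one_posSemidef _ (hFpos k) _ hM fun x => ?_⟩
    have hxx : 0 ≤ x ⬝ᵥ x := by simpa using dotProduct_star_self_nonneg x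
    rw [add_mul]
    by_cases hk : k < ΔT
    · have h1 := quad_le_sum_abs (F k)⁻¹ x
      have h2 := mul_le_mul_of_nonneg_right (hNle k hk) hxx
      linarith [mul_nonneg hC0.le hxx]
    · have h1 := quad_le_sum_abs (F (ΔT - 1))⁻¹ x
      have h2 := mul_le_mul_of_nonneg_right (hNle (ΔT - 1) (by omega)) hxx
      linarith [key x k (by omega)]
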